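/- Let R be a rigid subcategory of C and X a two-term maximal R[1]-rigid subcategory of C. For any object R₀ ∈ R, if there exists a triangle M[-1] →f X[-1] →g R₀ →h M in C such that g : X[-1] → R₀ is a right X[-1]-approximation of R₀, then M ∈ X. -/

import Mathlib

/-!
Setting: `C` is a Hom-finite Krull–Schmidt `k`-linear triangulated category over an
algebraically closed field `k` (Krull–Schmidt is encoded as Hom-finiteness together with
idempotent completeness). Subcategories are identified with their classes of objects and
are always assumed full, closed under isomorphisms, direct sums and direct summands.
-/

open CategoryTheory CategoryTheory.Limits CategoryTheory.Pretriangulated Opposite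

universe v u

variable {C : Type u} [Category.{v} C] [Preadditive C] [HasZeroObject C] [HasShift C ℤ]
  [∀ n : ℤ, (shiftFunctor C n).Additive] [Pretriangulated C]

/-- `Y` is a direct summand (retract) of `X`. -/
def IsRetractOf {D : Type*} [Category D] (Y X : D) : Prop :=
  ∃ (s : Y ⟶ X) (r : X ⟶ Y), s ≫ r = 𝟙 Y

/-- `S` is a direct sum (biproduct) of `F` and `G`. -/
def IsDirectSumOf {D : Type*} [Category D] [Preadditive D] (S F G : D) : Prop :=
  ∃ (i : F ⟶ S) (j : G ⟶ S) (p : S ⟶ F) (q : S ⟶ G),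
    i ≫ p = 𝟙 F ∧ j ≫ q = 𝟙 G ∧ i ≫ q = 0 ∧ j ≫ p = 0 ∧ p ≫ i + q ≫ j = 𝟙 S

/-- A subcategory of an additive category, identified with its class of objects:
closed under isomorphisms, finite direct sums and direct summands. -/
def IsSubcat {D : Type*} [Category D] [Preadditive D] (S : Set D) : Prop :=
  (∀ ⦃X Y : D⦄, (X ≅ Y) → X ∈ S → Y ∈ S) ∧
  (∀ ⦃F G T : D⦄, F ∈ S → G ∈ S → IsDirectSumOf T F G → T ∈ S) ∧
  (∀ ⦃X Y : D⦄, X ∈ S → IsRetractOf Y X → Y ∈ S)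

/-- `f : X ⟶ A` is a right `𝓧`-approximation of `A`:
every map `X' ⟶ A` with `X' ∈ 𝓧` factors through `f`. -/
def IsRightApprox {D : Type*} [Category D] (𝓧 : Set D) {X A : D} (f : X ⟶ A) : Prop :=
  ∀ X' ∈ 𝓧, ∀ g : X' ⟶ A, ∃ h : X' ⟶ X, h ≫ f = g

/-- `f : A ⟶ X` is a left `𝓧`-approximation of `A`:
every map `A ⟶ X'` with `X' ∈ 𝓧` factors through `f`. -/
def IsLeftApprox {D : Type*} [Category D] (𝓧 : Set D) {A X : D} (f : A ⟶ X) : Prop :=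
  ∀ X' ∈ 𝓧, ∀ g : A ⟶ X', ∃ h : X ⟶ X', f ≫ h = g

/-- `𝓧` is contravariantly finite: every object admits a right `𝓧`-approximation. -/
def ContravariantlyFinite {D : Type*} [Category D] (𝓧 : Set D) : Prop :=
  ∀ A : D, ∃ X ∈ 𝓧, ∃ f : X ⟶ A, IsRightApprox 𝓧 f

/-- `𝓧` is covariantly finite: every object admits a left `𝓧`-approximation. -/
def CovariantlyFinite {D : Type*} [Category D] (𝓧 : Set D) : Prop :=
  ∀ A : D, ∃ X ∈ 𝓧, ∃ f : A ⟶ X, IsLeftApprox 𝓧 f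

/-- `𝓧` is functorially finite. -/
def FunctoriallyFinite {D : Type*} [Category D] (𝓧 : Set D) : Prop :=
  ContravariantlyFinite 𝓧 ∧ CovariantlyFinite 𝓧

/-- `𝓧 ∨ add M`: the smallest subcategory containing `𝓧` and `M`. -/
def veeAdd {D : Type*} [Category D] [Preadditive D] (𝓧 : Set D) (M : D) : Set D :=
  ⋂₀ {T : Set D | IsSubcat T ∧ 𝓧 ⊆ T ∧ M ∈ T}

/-- The shift `𝓢⟦n⟧` of a subcategory (closed under isomorphism). -/
def shiftSet (𝓢 : Set C) (n : ℤ) : Set C := {Y | ∃ X ∈ 𝓢, Nonempty (Y ≅ X⟦n⟧)}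

/-- `𝓐 ∗ 𝓑`: the class of objects `M` admitting a distinguished triangle
`A → M → B → A⟦1⟧` with `A ∈ 𝓐` and `B ∈ 𝓑`. -/
def starSet (𝓐 𝓑 : Set C) : Set C :=
  {M | ∃ A ∈ 𝓐, ∃ B ∈ 𝓑, ∃ (f : A ⟶ M) (g : M ⟶ B) (h : B ⟶ A⟦(1:ℤ)⟧),
    Triangle.mk f g h ∈ distTriang C}

/-- `𝓡 ∗ 𝓡[1]`, the class of two-term objects with respect to `𝓡`. -/
def twoTerm (𝓡 : Set C) : Set C := starSet 𝓡 (shiftSet 𝓡 1)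

/-- `𝓡` is rigid: `Hom(R, R'[1]) = 0` for all `R, R' ∈ 𝓡`. -/
def IsRigidSubcat (𝓡 : Set C) : Prop :=
  ∀ R ∈ 𝓡, ∀ R' ∈ 𝓡, ∀ φ : R ⟶ R'⟦(1:ℤ)⟧, φ = 0

/-- `φ` lies in the ideal `[𝓡[1]]` of morphisms factoring through an object of `𝓡⟦1⟧`. -/
def InShiftIdeal (𝓡 : Set C) {A B : C} (φ : A ⟶ B) : Prop :=
  ∃ R ∈ 𝓡, ∃ (a : A ⟶ R⟦(1:ℤ)⟧) (b : R⟦(1:ℤ)⟧ ⟶ B), φ = a ≫ b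

/-- `𝓧` is `𝓡[1]`-rigid: `[𝓡[1]](𝓧, 𝓧[1]) = 0`. -/
def IsRelRigid (𝓡 𝓧 : Set C) : Prop :=
  ∀ X ∈ 𝓧, ∀ X' ∈ 𝓧, ∀ φ : X ⟶ X'⟦(1:ℤ)⟧, InShiftIdeal 𝓡 φ → φ = 0

/-- `[𝓡[1]](M, 𝓧[1]) = 0`. -/
def relOrthTo (𝓡 𝓧 : Set C) (M : C) : Prop :=
  ∀ X ∈ 𝓧, ∀ φ : M ⟶ X⟦(1:ℤ)⟧, InShiftIdeal 𝓡 φ → φ = 0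

/-- `[𝓡[1]](𝓧, M[1]) = 0`. -/
def relOrthFrom (𝓡 𝓧 : Set C) (M : C) : Prop :=
  ∀ X ∈ 𝓧, ∀ φ : X ⟶ M⟦(1:ℤ)⟧, InShiftIdeal 𝓡 φ → φ = 0

/-- `𝓧 ⊆ 𝓡 ∗ 𝓡[1]` is two-term maximal `𝓡[1]`-rigid: it is `𝓡[1]`-rigid and for every
`M ∈ 𝓡 ∗ 𝓡[1]`, `[𝓡[1]](𝓧 ∨ add M, (𝓧 ∨ add M)[1]) = 0` implies `M ∈ 𝓧`. -/
def IsTwoTermMaxRelRigid (𝓡 𝓧 : Set C) : Prop :=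
  𝓧 ⊆ twoTerm 𝓡 ∧ IsRelRigid 𝓡 𝓧 ∧
  ∀ M ∈ twoTerm 𝓡, IsRelRigid 𝓡 (veeAdd 𝓧 M) → M ∈ 𝓧

/-- `𝓧 ⊆ 𝓡 ∗ 𝓡[1]` is two-term weak `𝓡[1]`-cluster tilting: `𝓡 ⊆ 𝓧[-1] ∗ 𝓧` and
`𝓧 = {M ∈ 𝓡 ∗ 𝓡[1] : [𝓡[1]](M, 𝓧[1]) = 0 and [𝓡[1]](𝓧, M[1]) = 0}`. -/
def IsTwoTermWeakRelCT (𝓡 𝓧 : Set C) : Prop :=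
  𝓧 ⊆ twoTerm 𝓡 ∧
  (∀ R ∈ 𝓡, R ∈ starSet (shiftSet 𝓧 (-1)) 𝓧) ∧
  (∀ M : C, M ∈ 𝓧 ↔ M ∈ twoTerm 𝓡 ∧ relOrthTo 𝓡 𝓧 M ∧ relOrthFrom 𝓡 𝓧 M)

/-- `𝓧 ⊆ 𝓡 ∗ 𝓡[1]` is two-term `𝓡[1]`-cluster tilting: `𝓧` is contravariantly finite and
`𝓧 = {M ∈ 𝓡 ∗ 𝓡[1] : [𝓡[1]](M, 𝓧[1]) = 0 and [𝓡[1]](𝓧, M[1]) = 0}`. -/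
def IsTwoTermRelCT (𝓡 𝓧 : Set C) : Prop :=
  𝓧 ⊆ twoTerm 𝓡 ∧ ContravariantlyFinite 𝓧 ∧
  (∀ M : C, M ∈ 𝓧 ↔ M ∈ twoTerm 𝓡 ∧ relOrthTo 𝓡 𝓧 M ∧ relOrthFrom 𝓡 𝓧 M)

lemma InShiftIdeal.precomp {𝓡 : Set C} {A B D : C} (u : A ⟶ B) {φ : B ⟶ D}
    (hφ : InShiftIdeal 𝓡 φ) : InShiftIdeal 𝓡 (u ≫ φ) := by
  obtain ⟨R, hR, a, b, rfl⟩ := hφ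
  exact ⟨R, hR, u ≫ a, b, by simp⟩

lemma InShiftIdeal.postcomp {𝓡 : Set C} {A B D : C} {φ : A ⟶ B} (u : B ⟶ D)
    (hφ : InShiftIdeal 𝓡 φ) : InShiftIdeal 𝓡 (φ ≫ u) := by
  obtain ⟨R, hR, a, b, rfl⟩ := hφ
  exact ⟨R, hR, a, b ≫ u, by simp⟩

/-- The left orthogonal class is a subcategory. -/
lemma isSubcat_left (𝓡 𝓔 : Set C) :
    IsSubcat {Y : C | ∀ E ∈ 𝓔, ∀ φ : Y ⟶ E⟦(1:ℤ)⟧, InShiftIdeal 𝓡 φ → φ = 0} := by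
  refine ⟨?_, ?_, ?_⟩
  · intro A B e hA E hE φ hφ
    have h1 := hA E hE (e.hom ≫ φ) (hφ.precomp _)
    rw [← e.inv_hom_id_assoc φ, h1, comp_zero]
  · rintro F G T hF hG ⟨i, j, p, q, -, -, -, -, hs⟩ E hE φ hφ
    have h1 := hF E hE (i ≫ φ) (hφ.precomp _)
    have h2 := hG E hE (j ≫ φ) (hφ.precomp _)
    rw [← Category.id_comp φ, ← hs, Preadditive.add_comp, Category.assoc, Category.assoc,
      h1, h2, comp_zero, comp_zero, add_zero]
  · rintro A B hA ⟨s, r, hsr⟩ E hE φ hφ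
    have h1 := hA E hE (r ≫ φ) (hφ.precomp _)
    rw [← Category.id_comp φ, ← hsr, Category.assoc, h1, comp_zero]

/-- The right orthogonal class is a subcategory. -/
lemma isSubcat_right (𝓡 𝓔 : Set C) :
    IsSubcat {Y : C | ∀ E ∈ 𝓔, ∀ φ : E ⟶ Y⟦(1:ℤ)⟧, InShiftIdeal 𝓡 φ → φ = 0} := by
  refine ⟨?_, ?_, ?_⟩
  · intro A B e hA E hE φ hφ
    have h1 := hA E hE (φ ≫ e.inv⟦(1:ℤ)⟧') (hφ.postcomp _)
    have h3 : e.inv⟦(1:ℤ)⟧' ≫ e.hom⟦(1:ℤ)⟧' = 𝟙 _ := by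
      rw [← Functor.map_comp, e.inv_hom_id, CategoryTheory.Functor.map_id]
    rw [← Category.comp_id φ, ← h3, ← Category.assoc, h1, zero_comp]
  · rintro F G T hF hG ⟨i, j, p, q, -, -, -, -, hs⟩ E hE φ hφ
    have h1 := hF E hE (φ ≫ p⟦(1:ℤ)⟧') (hφ.postcomp _)
    have h2 := hG E hE (φ ≫ q⟦(1:ℤ)⟧') (hφ.postcomp _)
    have h3 : p⟦(1:ℤ)⟧' ≫ i⟦(1:ℤ)⟧' + q⟦(1:ℤ)⟧' ≫ j⟦(1:ℤ)⟧' = 𝟙 _ := by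
      rw [← Functor.map_comp, ← Functor.map_comp, ← Functor.map_add, hs, CategoryTheory.Functor.map_id]
    rw [← Category.comp_id φ, ← h3, Preadditive.comp_add, ← Category.assoc, ← Category.assoc,
      h1, h2, zero_comp, zero_comp, add_zero]
  · rintro A B hA ⟨s, r, hsr⟩ E hE φ hφ
    have h1 := hA E hE (φ ≫ s⟦(1:ℤ)⟧') (hφ.postcomp _)
    have h3 : s⟦(1:ℤ)⟧' ≫ r⟦(1:ℤ)⟧' = 𝟙 _ := by
      rw [← Functor.map_comp, hsr, CategoryTheory.Functor.map_id]
    rw [← Category.comp_id φ, ← h3, ← Category.assoc, h1, zero_comp]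

lemma isRelRigid_veeAdd {𝓡 𝓧 : Set C} {M : C} (h1 : IsRelRigid 𝓡 𝓧)
    (h2 : relOrthTo 𝓡 𝓧 M) (h3 : relOrthFrom 𝓡 𝓧 M)
    (h4 : ∀ φ : M ⟶ M⟦(1:ℤ)⟧, InShiftIdeal 𝓡 φ → φ = 0) :
    IsRelRigid 𝓡 (veeAdd 𝓧 M) := by
  have key : ∀ Y ∈ veeAdd 𝓧 M, ∀ E ∈ 𝓧 ∪ {M}, ∀ φ : Y ⟶ E⟦(1:ℤ)⟧,
      InShiftIdeal 𝓡 φ → φ = 0 := by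
    intro Y hY
    refine hY _ ⟨isSubcat_left 𝓡 (𝓧 ∪ {M}), ?_, ?_⟩
    · rintro A hA E (hE | rfl)
      · exact h1 A hA E hE
      · exact h3 A hA
    · rintro E (hE | rfl)
      · exact h2 E hE
      · exact h4
  intro Y hY E hE
  have := hE _ ⟨isSubcat_right 𝓡 (veeAdd 𝓧 M), ?_, ?_⟩
  · exact this Y hY
  · intro A hA E hE
    exact key E hE A (Or.inl hA)
  · intro E hE
    exact key E hE M (Or.inr rfl)

lemma isDirectSumOf_biprod [HasBinaryBiproducts C] (F G : C) : IsDirectSumOf (F ⊞ G) F G :=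
  ⟨biprod.inl, biprod.inr, biprod.fst, biprod.snd, by simp, by simp, by simp, by simp, by simp⟩

/-- If `𝟙 Z` is a sum of maps factoring through `A⟦1⟧` and `B⟦1⟧`, then `Z ∈ 𝓡[1]`. -/
lemma mem_shiftSet_of_sum {𝓡 : Set C} (h𝓡sub : IsSubcat 𝓡) {A B Z : C} (hA : A ∈ 𝓡)
    (hB : B ∈ 𝓡) (a : Z ⟶ A⟦(1:ℤ)⟧) (a' : A⟦(1:ℤ)⟧ ⟶ Z) (b : Z ⟶ B⟦(1:ℤ)⟧)
    (b' : B⟦(1:ℤ)⟧ ⟶ Z) (hs : a ≫ a' + b ≫ b' = 𝟙 Z) : Z ∈ shiftSet 𝓡 1 := by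
  haveI : HasBinaryBiproducts C := inferInstance
  let e : Z⟦(-1:ℤ)⟧⟦(1:ℤ)⟧ ≅ Z := (shiftEquiv C (1:ℤ)).counitIso.app Z
  refine ⟨Z⟦(-1:ℤ)⟧, ?_, ⟨e.symm⟩⟩
  refine h𝓡sub.2.2 (h𝓡sub.2.1 hA hB (isDirectSumOf_biprod A B)) ?_
  obtain ⟨u, hu⟩ := (shiftFunctor C (1:ℤ)).map_surjective (e.hom ≫ a)
  obtain ⟨u', hu'⟩ := (shiftFunctor C (1:ℤ)).map_surjective (a' ≫ e.inv)
  obtain ⟨w, hw⟩ := (shiftFunctor C (1:ℤ)).map_surjective (e.hom ≫ b)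
  obtain ⟨w', hw'⟩ := (shiftFunctor C (1:ℤ)).map_surjective (b' ≫ e.inv)
  refine ⟨biprod.lift u w, biprod.desc u' w', ?_⟩
  rw [biprod.lift_desc]
  apply (shiftFunctor C (1:ℤ)).map_injective
  rw [Functor.map_add, Functor.map_comp, Functor.map_comp, hu, hu', hw, hw', CategoryTheory.Functor.map_id]
  have : e.hom ≫ (a ≫ a' + b ≫ b') ≫ e.inv = 𝟙 _ := by rw [hs]; simp
  simpa using this

lemma mem_twoTerm_of_triangle {𝓡 : Set C} (h𝓡sub : IsSubcat 𝓡) (h𝓡 : IsRigidSubcat 𝓡)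
    {R₀ M X : C} (hR₀ : R₀ ∈ 𝓡) (hX : X ∈ twoTerm 𝓡)
    (a : R₀ ⟶ M) (b : M ⟶ X) (c : X ⟶ R₀⟦(1:ℤ)⟧) (htri : Triangle.mk a b c ∈ distTriang C) :
    M ∈ twoTerm 𝓡 := by
  haveI : HasBinaryBiproducts C := inferInstance
  obtain ⟨R₁, hR₁, S, ⟨R₂, hR₂, ⟨e⟩⟩, x, τ, δ, hXtri⟩ := hX
  have hab : a ≫ b = 0 := comp_distTriang_mor_zero₁₂ _ htri
  have hxτ : x ≫ τ = 0 := comp_distTriang_mor_zero₁₂ _ hXtri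
  obtain ⟨m, hm⟩ : ∃ m : R₁ ⟶ M, x = m ≫ b :=
    Triangle.coyoneda_exact₃ _ htri x (h𝓡 _ hR₁ _ hR₀ (x ≫ c))
  obtain ⟨Z, q, d, hZ⟩ := distinguished_cocone_triangle (biprod.desc a m)
  have hq : biprod.desc a m ≫ q = 0 := comp_distTriang_mor_zero₁₂ _ hZ
  have haq : a ≫ q = 0 := by
    have := biprod.inl ≫= hq
    simpa using this
  have hmq : m ≫ q = 0 := by
    have := biprod.inr ≫= hq
    simpa using this
  obtain ⟨ζ, hζ⟩ : ∃ ζ : Z ⟶ S, b ≫ τ = q ≫ ζ := by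
    refine Triangle.yoneda_exact₂ _ hZ (b ≫ τ) ?_
    show biprod.desc a m ≫ b ≫ τ = 0
    apply biprod.hom_ext'
    · simp [reassoc_of% hab]
    · simp only [biprod.inr_desc_assoc, comp_zero]
      rw [← Category.assoc, ← hm, hxτ]
  obtain ⟨y, hy⟩ : ∃ y : X ⟶ Z, q = b ≫ y := Triangle.yoneda_exact₂ _ htri q haq
  obtain ⟨ω, hω⟩ : ∃ ω : S ⟶ Z, y = τ ≫ ω := by
    refine Triangle.yoneda_exact₂ _ hXtri y ?_
    show x ≫ y = 0
    rw [hm, Category.assoc, ← hy, hmq]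
  obtain ⟨t, ht⟩ : ∃ t : (R₀ ⊞ R₁)⟦(1:ℤ)⟧ ⟶ Z, 𝟙 Z - ζ ≫ ω = d ≫ t := by
    refine Triangle.yoneda_exact₃ _ hZ (𝟙 Z - ζ ≫ ω) ?_
    show q ≫ (𝟙 Z - ζ ≫ ω) = 0
    rw [Preadditive.comp_sub, Category.comp_id, ← Category.assoc, ← hζ, Category.assoc,
      ← hω, ← hy, sub_self]
  have hA : (R₀ ⊞ R₁) ∈ 𝓡 := h𝓡sub.2.1 hR₀ hR₁ (isDirectSumOf_biprod _ _)
  refine ⟨R₀ ⊞ R₁, hA, Z, ?_, biprod.desc a m, q, d, hZ⟩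
  refine mem_shiftSet_of_sum h𝓡sub hA hR₂ d t (ζ ≫ e.hom) (e.inv ≫ ω) ?_
  rw [← ht]
  simp

lemma mem_of_triangle_core {𝓡 𝓧 : Set C} (h𝓡sub : IsSubcat 𝓡) (h𝓡 : IsRigidSubcat 𝓡)
    (h𝓧max : IsTwoTermMaxRelRigid 𝓡 𝓧)
    {R₀ M X : C} (hR₀ : R₀ ∈ 𝓡) (hX : X ∈ 𝓧)
    (a : R₀ ⟶ M) (b : M ⟶ X) (c : X ⟶ R₀⟦(1:ℤ)⟧) (htri : Triangle.mk a b c ∈ distTriang C)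
    (happ : IsRightApprox 𝓧 c) : M ∈ 𝓧 := by
  obtain ⟨h2, hrig, hmax⟩ := h𝓧max
  have hfrom : relOrthFrom 𝓡 𝓧 M := by
    intro X' hX' φ hφ
    have h0 : φ ≫ b⟦(1:ℤ)⟧' = 0 := hrig X' hX' X hX _ (hφ.postcomp _)
    obtain ⟨w, hw⟩ : ∃ w : X' ⟶ R₀⟦(1:ℤ)⟧, φ = w ≫ (-a⟦(1:ℤ)⟧') := by
      refine Triangle.coyoneda_exact₂ _ (rot_of_distTriang _ (rot_of_distTriang _ (rot_of_distTriang _ htri))) φ ?_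
      show φ ≫ (-b⟦(1:ℤ)⟧') = 0
      rw [Preadditive.comp_neg, h0, neg_zero]
    obtain ⟨v, hv⟩ := happ X' hX' w
    have hca : c ≫ a⟦(1:ℤ)⟧' = 0 := comp_distTriang_mor_zero₃₁ _ htri
    rw [hw, ← hv, Preadditive.comp_neg, Category.assoc, hca, comp_zero, neg_zero]
  have hfac : ∀ R ∈ 𝓡, ∀ u : M ⟶ R⟦(1:ℤ)⟧, ∃ v : X ⟶ R⟦(1:ℤ)⟧, u = b ≫ v := fun R hR u =>
    Triangle.yoneda_exact₂ _ htri u (h𝓡 _ hR₀ _ hR (a ≫ u))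
  refine hmax M (mem_twoTerm_of_triangle h𝓡sub h𝓡 hR₀ (h2 hX) a b c htri)
    (isRelRigid_veeAdd hrig ?_ hfrom ?_)
  · rintro X' hX' φ ⟨R, hR, u, u', rfl⟩
    obtain ⟨v, rfl⟩ := hfac R hR u
    rw [Category.assoc, hrig X hX X' hX' (v ≫ u') ⟨R, hR, v, u', rfl⟩, comp_zero]
  · rintro φ ⟨R, hR, u, u', rfl⟩
    obtain ⟨v, rfl⟩ := hfac R hR u
    rw [Category.assoc, hfrom X hX (v ≫ u') ⟨R, hR, v, u', rfl⟩, comp_zero]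

/-- **Lemma (Statement 2).** Let `𝓧` be a two-term maximal `𝓡[1]`-rigid subcategory.
For `R₀ ∈ 𝓡`, if there is a triangle `M⟦-1⟧ → X⟦-1⟧ → R₀ → M` with `X ∈ 𝓧` such that
`g : X⟦-1⟧ ⟶ R₀` is a right `𝓧[-1]`-approximation of `R₀`, then `M ∈ 𝓧`. -/
theorem mem_of_triangle_rightApprox
    (k : Type*) [Field k] [IsAlgClosed k] [Linear k C]
    [∀ X Y : C, FiniteDimensional k (X ⟶ Y)] [IsIdempotentComplete C]
    (𝓡 𝓧 : Set C) (h𝓡sub : IsSubcat 𝓡) (h𝓡 : IsRigidSubcat 𝓡)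
    (h𝓧sub : IsSubcat 𝓧) (h𝓧max : IsTwoTermMaxRelRigid 𝓡 𝓧)
    (R₀ : C) (hR₀ : R₀ ∈ 𝓡) (M X : C) (hX : X ∈ 𝓧)
    (f : M⟦(-1:ℤ)⟧ ⟶ X⟦(-1:ℤ)⟧) (g : X⟦(-1:ℤ)⟧ ⟶ R₀) (h : R₀ ⟶ M⟦(-1:ℤ)⟧⟦(1:ℤ)⟧)
    (htri : Triangle.mk f g h ∈ distTriang C)
    (happrox : IsRightApprox (shiftSet 𝓧 (-1)) g) :
    M ∈ 𝓧 := by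
  let eM : M⟦(-1:ℤ)⟧⟦(1:ℤ)⟧ ≅ M := (shiftEquiv C (1:ℤ)).counitIso.app M
  let eX : X⟦(-1:ℤ)⟧⟦(1:ℤ)⟧ ≅ X := (shiftEquiv C (1:ℤ)).counitIso.app X
  refine h𝓧sub.1 eM ?_
  have ht := rot_of_distTriang _ (rot_of_distTriang _ htri)
  refine mem_of_triangle_core (R₀ := R₀) h𝓡sub h𝓡 h𝓧max hR₀ (h𝓧sub.1 eX.symm hX)
    h (-f⟦(1:ℤ)⟧') (-g⟦(1:ℤ)⟧') ht ?_
  intro Y hY w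
  let eY : Y⟦(-1:ℤ)⟧⟦(1:ℤ)⟧ ≅ Y := (shiftEquiv C (1:ℤ)).counitIso.app Y
  obtain ⟨w₀, hw₀⟩ := (shiftFunctor C (1:ℤ)).map_surjective (eY.hom ≫ w)
  obtain ⟨l, hl⟩ := happrox (Y⟦(-1:ℤ)⟧) ⟨Y, hY, ⟨Iso.refl _⟩⟩ w₀
  refine ⟨-(eY.inv ≫ l⟦(1:ℤ)⟧'), ?_⟩
  rw [Preadditive.neg_comp_neg, Category.assoc, ← Functor.map_comp, hl, hw₀, eY.inv_hom_id_assoc]
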